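/- Fix α > 0 and δ ∈ (0,1). Suppose assumptions (A1), (A4), (A5), (A6) hold, and that the output (v̂, ŵ) of Inexact-PRO-RL satisfies the optimization-error conditions L̂_α(v̂,ŵ) − min_{v∈V} L̂_α(v,ŵ) ≤ ε_{o,v} and max_{w∈W} min_{v∈V} L̂_α(v,w) − min_{v∈V} L̂_α(v,ŵ) ≤ ε_{o,w}. Then with probability at least 1−δ over the datasets, J(π*_α) − J(π̂) ≤ (1/(1−γ))·E_{s∼d*_α}[‖π*_α(·|s) − π̂(·|s)‖₁] ≤ (2/(1−γ))·‖ŵ − w*_α‖_{2,d^D} ≤ (4/(1−γ))·√(ε_stat/(α·M_f)) + (2/(1−γ))·√(2(ε_opt + ε_{α,app})/(α·M_f)), where ε_opt = ε_{o,v} + ε_{o,w} and ε_{α,app} = (B_{w,α}+1)·ε_{α,r,v} + (B_{e,α} + α·B_{f',α})·ε_{α,r,w}. -/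

import Mathlib

open MeasureTheory
open scoped BigOperators ENNReal

namespace ProRL

/-- The discrete measure on a type induced by a real-valued weight function. -/
noncomputable def discMeasure {X : Type*} [MeasurableSpace X] (p : X → ℝ) : Measure X :=
  Measure.sum fun x => ENNReal.ofReal (p x) • Measure.dirac x

variable {S A : Type*} [Fintype S] [Fintype A]

/-- The `t`-step state-action distribution of policy `π` started from `μ0`. -/
noncomputable def saDist (P : S → A → S → ℝ) (μ0 : S → ℝ) (π : S → A → ℝ) :
    ℕ → S → A → ℝ
  | 0 => fun s a => μ0 s * π s a
  | t + 1 => fun s a =>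
      (∑ s' : S, ∑ a' : A, saDist P μ0 π t s' a' * P s' a' s) * π s a

/-- The discounted state-action occupancy `d^π(s,a)`. -/
noncomputable def occ (P : S → A → S → ℝ) (μ0 : S → ℝ) (γ : ℝ) (π : S → A → ℝ)
    (s : S) (a : A) : ℝ :=
  (1 - γ) * ∑' t : ℕ, γ ^ t * saDist P μ0 π t s a

/-- The (normalized) expected discounted return `J(π) = E_{d^π}[r]`. -/
noncomputable def Jret (P : S → A → S → ℝ) (r : S → A → ℝ) (μ0 : S → ℝ) (γ : ℝ)
    (π : S → A → ℝ) : ℝ :=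
  ∑ s : S, ∑ a : A, occ P μ0 γ π s a * r s a

/-- `π` is a (stationary, stochastic) policy. -/
def IsPolicy (π : S → A → ℝ) : Prop :=
  (∀ s a, 0 ≤ π s a) ∧ ∀ s, ∑ a : A, π s a = 1

/-- The Bellman residual `e_v(s,a) = r(s,a) + γ ∑_{s'} P(s'|s,a) v(s') − v(s)`. -/
noncomputable def eV (P : S → A → S → ℝ) (r : S → A → ℝ) (γ : ℝ) (v : S → ℝ)
    (s : S) (a : A) : ℝ :=
  r s a + γ * ∑ s' : S, P s a s' * v s' - v s

/-- The population Lagrangian `L_α(v,w)`. -/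
noncomputable def Lag (P : S → A → S → ℝ) (r : S → A → ℝ) (μ0 : S → ℝ) (γ : ℝ)
    (dD : S → A → ℝ) (f : ℝ → ℝ) (α : ℝ) (v : S → ℝ) (w : S → A → ℝ) : ℝ :=
  (1 - γ) * ∑ s : S, μ0 s * v s
    - α * ∑ s : S, ∑ a : A, dD s a * f (w s a)
    + ∑ s : S, ∑ a : A, dD s a * (w s a * eV P r γ v s a)

/-- The empirical Lagrangian `L̂_α(v,w)` built from the transition dataset `D`
(`D i = ((sᵢ,aᵢ), s'ᵢ)`, with `rᵢ = r sᵢ aᵢ`) and initial-state dataset `D0`. -/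
noncomputable def empLag (r : S → A → ℝ) (γ : ℝ) (f : ℝ → ℝ) (α : ℝ) {n n0 : ℕ}
    (D : Fin n → (S × A) × S) (D0 : Fin n0 → S) (v : S → ℝ) (w : S → A → ℝ) : ℝ :=
  (1 - γ) * ((n0 : ℝ)⁻¹ * ∑ j : Fin n0, v (D0 j))
    - α * ((n : ℝ)⁻¹ * ∑ i : Fin n, f (w (D i).1.1 (D i).1.2))
    + (n : ℝ)⁻¹ * ∑ i : Fin n,
        w (D i).1.1 (D i).1.2 *
          (r (D i).1.1 (D i).1.2 + γ * v (D i).2 - v (D i).1.1)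

/-- Per-state normalization of a state-action weight into a policy
(uniform where the state marginal is not positive). -/
noncomputable def normPolicy (d : S → A → ℝ) (s : S) (a : A) : ℝ :=
  if 0 < ∑ a' : A, d s a' then d s a / ∑ a' : A, d s a'
  else (Fintype.card A : ℝ)⁻¹

/-- Policy extraction from a density ratio `w` and a behavior policy `piD`
(uniform where the normalizer vanishes). -/
noncomputable def extractPolicy (piD w : S → A → ℝ) (s : S) (a : A) : ℝ :=
  if 0 < ∑ a' : A, w s a' * piD s a' then
    w s a * piD s a / ∑ a' : A, w s a' * piD s a'
  else (Fintype.card A : ℝ)⁻¹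

/-- Behavior policy `π_D(a|s)` obtained from the data distribution `d^D`. -/
noncomputable def behPolicy (dD : S → A → ℝ) : S → A → ℝ := normPolicy dD

/-- The state-action measure `d(s,a) = w(s,a)·d^D(s,a)`. -/
noncomputable def dstar (dD w : S → A → ℝ) : S → A → ℝ := fun s a => w s a * dD s a

/-- The weighted `L²(d^D)` norm of a state-action function. -/
noncomputable def l2nrm (dD g : S → A → ℝ) : ℝ :=
  Real.sqrt (∑ s : S, ∑ a : A, dD s a * g s a ^ 2)

/-- `‖π(·|s) − π'(·|s)‖₁`. -/
noncomputable def l1Pol (π π' : S → A → ℝ) (s : S) : ℝ := ∑ a : A, |π s a - π' s a|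

/-- `E_{s ∼ d}[‖π(·|s) − π'(·|s)‖₁]` where `d` is a state-action distribution. -/
noncomputable def expL1 (d π π' : S → A → ℝ) : ℝ :=
  ∑ s : S, (∑ a : A, d s a) * l1Pol π π' s

/-- The statistical error term `ε_stat`. -/
noncomputable def epsStat (γ α Bv Bf Bw Be δ : ℝ) (nV nW n n0 : ℕ) : ℝ :=
  (1 - γ) * Bv * Real.sqrt (2 * Real.log (4 * (nV : ℝ) / δ) / (n0 : ℝ))
    + (α * Bf + Bw * Be) *
        Real.sqrt (2 * Real.log (4 * ((nV : ℝ) * (nW : ℝ)) / δ) / (n : ℝ))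

/-- The Bellman flow equations for a state-action measure `d`. -/
def BellmanFlow (P : S → A → S → ℝ) (μ0 : S → ℝ) (γ : ℝ) (d : S → A → ℝ) : Prop :=
  ∀ s : S, ∑ a : A, d s a
    = (1 - γ) * μ0 s + γ * ∑ s' : S, ∑ a' : A, P s' a' s * d s' a'

/-- `(v,w)` is a saddle point of `max_{w ≥ 0} min_v L_α(v,w)`. -/
def IsSaddle (P : S → A → S → ℝ) (r : S → A → ℝ) (μ0 : S → ℝ) (γ : ℝ)
    (dD : S → A → ℝ) (f : ℝ → ℝ) (α : ℝ) (v : S → ℝ) (w : S → A → ℝ) : Prop :=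
  (∀ s a, 0 ≤ w s a) ∧
  (∀ v' : S → ℝ, Lag P r μ0 γ dD f α v w ≤ Lag P r μ0 γ dD f α v' w) ∧
  (∀ w' : S → A → ℝ, (∀ s a, 0 ≤ w' s a) →
    Lag P r μ0 γ dD f α v w' ≤ Lag P r μ0 γ dD f α v w)

/-- `(v,w)` is a saddle point of `max_{0 ≤ w ≤ Bw} min_v L_α(v,w)` (constrained LP). -/
def IsSaddleB (P : S → A → S → ℝ) (r : S → A → ℝ) (μ0 : S → ℝ) (γ : ℝ)
    (dD : S → A → ℝ) (f : ℝ → ℝ) (α Bw : ℝ) (v : S → ℝ) (w : S → A → ℝ) : Prop :=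
  (∀ s a, 0 ≤ w s a ∧ w s a ≤ Bw) ∧
  (∀ v' : S → ℝ, Lag P r μ0 γ dD f α v w ≤ Lag P r μ0 γ dD f α v' w) ∧
  (∀ w' : S → A → ℝ, (∀ s a, 0 ≤ w' s a ∧ w' s a ≤ Bw) →
    Lag P r μ0 γ dD f α v w' ≤ Lag P r μ0 γ dD f α v w)

/-- `(vhat, what)` is an exact max-min point of the empirical Lagrangian over `V × W`:
`vhat ∈ argmin_{v ∈ V} L̂(v, what)` and `what ∈ argmax_{w ∈ W} min_{v ∈ V} L̂(v, w)`. -/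
def IsProRLOutput (r : S → A → ℝ) (γ : ℝ) (f : ℝ → ℝ) (α : ℝ)
    (V : Finset (S → ℝ)) (W : Finset (S → A → ℝ)) {n n0 : ℕ}
    (D : Fin n → (S × A) × S) (D0 : Fin n0 → S)
    (vhat : S → ℝ) (what : S → A → ℝ) : Prop :=
  vhat ∈ V ∧ what ∈ W ∧
  (∀ v ∈ V, empLag r γ f α D D0 vhat what ≤ empLag r γ f α D D0 v what) ∧
  ∀ w ∈ W, ∀ vw ∈ V,
    (∀ v ∈ V, empLag r γ f α D D0 vw w ≤ empLag r γ f α D D0 v w) →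
      empLag r γ f α D D0 vw w ≤ empLag r γ f α D D0 vhat what

/-- Weight of a transition tuple `((s,a),s')` under `(s,a) ∼ d^D`, `s' ∼ P(·|s,a)`. -/
noncomputable def tupleWeight (P : S → A → S → ℝ) (dD : S → A → ℝ)
    (x : (S × A) × S) : ℝ :=
  dD x.1.1 x.1.2 * P x.1.1 x.1.2 x.2

/-- The joint law of the transition dataset `D` (i.i.d. from `d^D ⊗ P`) and the
initial-state dataset `D0` (i.i.d. from `μ0`). -/
noncomputable def dataMeasure [MeasurableSpace S] [MeasurableSpace A]
    (P : S → A → S → ℝ) (dD : S → A → ℝ) (μ0 : S → ℝ) (n n0 : ℕ) :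
    Measure ((Fin n → (S × A) × S) × (Fin n0 → S)) :=
  (Measure.pi fun _ : Fin n => discMeasure (tupleWeight P dD)).prod
    (Measure.pi fun _ : Fin n0 => discMeasure μ0)

/-- The joint law of datasets `D1`, `D2` (both i.i.d. from `d^D ⊗ P`) and `D0`
(i.i.d. from `μ0`), used by PRO-RL-BC. -/
noncomputable def dataMeasure3 [MeasurableSpace S] [MeasurableSpace A]
    (P : S → A → S → ℝ) (dD : S → A → ℝ) (μ0 : S → ℝ) (n1 n2 n0 : ℕ) :
    Measure ((Fin n1 → (S × A) × S) × (Fin n2 → (S × A) × S) × (Fin n0 → S)) :=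
  (Measure.pi fun _ : Fin n1 => discMeasure (tupleWeight P dD)).prod
    ((Measure.pi fun _ : Fin n2 => discMeasure (tupleWeight P dD)).prod
      (Measure.pi fun _ : Fin n0 => discMeasure μ0))

/-- `v` is the optimal value function: it satisfies the Bellman optimality equation. -/
def IsOptValue [Nonempty A] (P : S → A → S → ℝ) (r : S → A → ℝ) (γ : ℝ)
    (v : S → ℝ) : Prop :=
  ∀ s : S, v s = Finset.univ.sup' Finset.univ_nonempty
    (fun a : A => r s a + γ * ∑ s' : S, P s a s' * v s')

/-- Basic assumptions on the MDP, the regularizer-free data, and the data distribution. -/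
structure MDPAssumptions (P : S → A → S → ℝ) (r : S → A → ℝ) (μ0 : S → ℝ) (γ : ℝ)
    (dD : S → A → ℝ) : Prop where
  P_nonneg : ∀ s a s', 0 ≤ P s a s'
  P_sum : ∀ s a, ∑ s' : S, P s a s' = 1
  r_nonneg : ∀ s a, 0 ≤ r s a
  r_le_one : ∀ s a, r s a ≤ 1
  γ_nonneg : 0 ≤ γ
  γ_lt_one : γ < 1
  μ0_pos : ∀ s, 0 < μ0 s
  μ0_sum : ∑ s : S, μ0 s = 1
  dD_nonneg : ∀ s a, 0 ≤ dD s a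
  dD_sum : ∑ s : S, ∑ a : A, dD s a = 1

/-- Regularity of the regularizer `f`: continuously differentiable with derivative `f'`,
`M_f`-strongly convex, and with `|f'| ≤ Bf'`, `|f| ≤ Bf` on `[0, Bw]`. -/
structure RegAssumptions (f f' : ℝ → ℝ) (Mf Bw Bf' Bf : ℝ) : Prop where
  deriv : ∀ x, HasDerivAt f (f' x) x
  strong : StrongConvexOn Set.univ Mf f
  Mf_pos : 0 < Mf
  f'_bdd : ∀ x, 0 ≤ x → x ≤ Bw → |f' x| ≤ Bf'
  f_bdd : ∀ x, 0 ≤ x → x ≤ Bw → |f x| ≤ Bf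

/-- `w` is an optimal density ratio of the unregularized LP (the set `W*₀`). -/
def OptRatio (P : S → A → S → ℝ) (r : S → A → ℝ) (μ0 : S → ℝ) (γ : ℝ)
    (dD : S → A → ℝ) (w : S → A → ℝ) : Prop :=
  (∀ s a, 0 ≤ w s a) ∧ BellmanFlow P μ0 γ (dstar dD w) ∧
  ∀ w' : S → A → ℝ, (∀ s a, 0 ≤ w' s a) → BellmanFlow P μ0 γ (dstar dD w') →
    ∑ s : S, ∑ a : A, dstar dD w' s a * r s a
      ≤ ∑ s : S, ∑ a : A, dstar dD w s a * r s a

section Concentration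

open ProbabilityTheory

theorem isProbabilityMeasure_discMeasure {X : Type*} [Fintype X] [MeasurableSpace X]
    {p : X → ℝ} (hp : ∀ x, 0 ≤ p x) (hp1 : ∑ x, p x = 1) :
    IsProbabilityMeasure (discMeasure p) := by
  constructor
  simp only [discMeasure, Measure.sum_apply _ MeasurableSet.univ, Measure.smul_apply,
    measure_univ, smul_eq_mul, mul_one, tsum_fintype]
  rw [← ENNReal.ofReal_sum_of_nonneg fun x _ => hp x, hp1, ENNReal.ofReal_one]

variable {X : Type*} [Fintype X] [MeasurableSpace X] [MeasurableSingletonClass X]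

theorem integral_discMeasure {p : X → ℝ} (hp : ∀ x, 0 ≤ p x) (g : X → ℝ) :
    ∫ x, g x ∂discMeasure p = ∑ x, p x * g x := by
  rw [discMeasure, integral_sum_dirac fun i => ENNReal.ofReal_ne_top, tsum_fintype]
  simp [ENNReal.toReal_ofReal, hp]

/-- One-sided Hoeffding inequality for the empirical mean of a bounded function. -/
theorem measureReal_mean_sub_gt_le {p : X → ℝ} (hp : ∀ x, 0 ≤ p x) (hp1 : ∑ x, p x = 1)
    {g : X → ℝ} {c : ℝ} (hg : ∀ x, |g x| ≤ c) {n : ℕ} (hn : 0 < n) {l : ℝ} (hl : 0 ≤ l) :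
    (Measure.pi fun _ : Fin n => discMeasure p).real
      {D | c * √(2 * l / n) < (n : ℝ)⁻¹ * ∑ i, g (D i) - ∑ x, p x * g x} ≤ Real.exp (-l) := by
  have := isProbabilityMeasure_discMeasure hp hp1
  have hn' : (0 : ℝ) < n := by exact_mod_cast hn
  obtain ⟨x0⟩ : Nonempty X := by
    by_contra h
    rw [not_nonempty_iff] at h
    simp at hp1
  have hc0 : 0 ≤ c := (abs_nonneg _).trans (hg x0)
  rcases hc0.eq_or_lt with rfl | hc
  · have hg0 : ∀ x, g x = 0 := fun x => abs_nonpos_iff.1 (hg x)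
    simp [hg0, Real.exp_nonneg]
  set m := ∑ x, p x * g x with hm
  have hint : ∫ x, g x ∂discMeasure p = m := integral_discMeasure hp g
  have hsub : HasSubgaussianMGF (fun x => g x - m) ((‖c - -c‖₊ / 2) ^ 2) (discMeasure p) := by
    have := hasSubgaussianMGF_of_mem_Icc (μ := discMeasure p) (X := g) (a := -c) (b := c)
      (Measurable.of_discrete.aemeasurable) (.of_forall fun x => abs_le.1 (hg x))
    rwa [hint] at this
  have hind : iIndepFun (fun (i : Fin n) (D : Fin n → X) => g (D i) - m)
      (Measure.pi fun _ : Fin n => discMeasure p) :=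
    iIndepFun_pi (X := fun _ x => g x - m) fun _ => Measurable.of_discrete.aemeasurable
  have hsub' : ∀ i ∈ (Finset.univ : Finset (Fin n)),
      HasSubgaussianMGF (fun D : Fin n → X => g (D i) - m) ((‖c - -c‖₊ / 2) ^ 2)
        (Measure.pi fun _ : Fin n => discMeasure p) := fun i _ => by
    have hev := measurePreserving_eval (fun _ : Fin n => discMeasure p) i
    refine HasSubgaussianMGF.of_map (Y := Function.eval i) (X := fun x => g x - m)
      hev.measurable.aemeasurable ?_
    rwa [hev.map_eq]
  have hε : 0 ≤ n * (c * √(2 * l / n)) := by positivity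
  have key := HasSubgaussianMGF.measure_sum_ge_le_of_iIndepFun hind hsub' hε
  refine (measureReal_mono ?_ (measure_ne_top _ _)).trans (key.trans (le_of_eq ?_))
  · intro D hD
    simp only [Set.mem_ofPred_eq, Finset.sum_sub_distrib, Finset.sum_const, Finset.card_univ,
      Fintype.card_fin, nsmul_eq_mul] at hD ⊢
    have := mul_le_mul_of_nonneg_left hD.le hn'.le
    rwa [mul_sub, mul_inv_cancel_left₀ hn'.ne'] at this
  · congr 1
    simp only [Finset.sum_const, Finset.card_univ, Fintype.card_fin, nsmul_eq_mul]
    push_cast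
    rw [mul_pow, mul_pow, Real.sq_sqrt (by positivity), Real.norm_of_nonneg (by linarith)]
    field_simp
    ring

/-- Two-sided Hoeffding inequality for the empirical mean of a bounded function. -/
theorem measure_abs_mean_sub_gt_le {p : X → ℝ} (hp : ∀ x, 0 ≤ p x) (hp1 : ∑ x, p x = 1)
    {g : X → ℝ} {c : ℝ} (hg : ∀ x, |g x| ≤ c) {n : ℕ} (hn : 0 < n) {l : ℝ} (hl : 0 ≤ l) :
    (Measure.pi fun _ : Fin n => discMeasure p)
      {D | c * √(2 * l / n) < |(n : ℝ)⁻¹ * ∑ i, g (D i) - ∑ x, p x * g x|}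
      ≤ ENNReal.ofReal (2 * Real.exp (-l)) := by
  have := isProbabilityMeasure_discMeasure hp hp1
  have hpos := measureReal_mean_sub_gt_le hp hp1 hg hn hl
  have hneg := measureReal_mean_sub_gt_le hp hp1 (g := fun x => -g x) (c := c)
    (by simpa using hg) hn hl
  rw [← ofReal_measureReal]
  refine ENNReal.ofReal_le_ofReal ?_
  rw [two_mul (Real.exp (-l))]
  refine le_trans ?_ ((measureReal_union_le _ _).trans (add_le_add hpos hneg))
  refine measureReal_mono ?_ (measure_ne_top _ _)
  intro D hD
  rw [Set.mem_ofPred_eq, lt_abs] at hD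
  rcases hD with h | h
  · exact Or.inl h
  · refine Or.inr ?_
    simp only [Set.mem_ofPred_eq, Finset.sum_neg_distrib, mul_neg]
    linarith

/-- Uniform version of Hoeffding's inequality over a finite family of bounded functions. -/
theorem measure_exists_abs_mean_sub_gt_le {p : X → ℝ} (hp : ∀ x, 0 ≤ p x)
    (hp1 : ∑ x, p x = 1) {ι : Type*} {T : Finset ι} (hT : T.Nonempty) {g : ι → X → ℝ} {c : ℝ}
    (hg : ∀ t ∈ T, ∀ x, |g t x| ≤ c) {n : ℕ} (hn : 0 < n) {δ : ℝ} (hδ0 : 0 < δ) (hδ1 : δ < 1) :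
    (Measure.pi fun _ : Fin n => discMeasure p)
      {D | ∃ t ∈ T, c * √(2 * Real.log (4 * T.card / δ) / n)
        < |(n : ℝ)⁻¹ * ∑ i, g t (D i) - ∑ x, p x * g t x|}
      ≤ ENNReal.ofReal (δ / 2) := by
  have hcard : (1 : ℝ) ≤ T.card := by exact_mod_cast hT.card_pos
  have harg : 1 ≤ 4 * T.card / δ := by
    rw [le_div_iff₀ hδ0]; linarith
  have hset : {D : Fin n → X | ∃ t ∈ T, c * √(2 * Real.log (4 * T.card / δ) / n)
        < |(n : ℝ)⁻¹ * ∑ i, g t (D i) - ∑ x, p x * g t x|}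
      = ⋃ t ∈ T, {D | c * √(2 * Real.log (4 * T.card / δ) / n)
        < |(n : ℝ)⁻¹ * ∑ i, g t (D i) - ∑ x, p x * g t x|} := by
    ext D; simp
  rw [hset]
  refine (measure_biUnion_finset_le _ _).trans ((Finset.sum_le_sum fun t ht =>
    measure_abs_mean_sub_gt_le hp hp1 (hg t ht) hn (Real.log_nonneg harg)).trans ?_)
  rw [Finset.sum_const, nsmul_eq_mul, Real.exp_neg, Real.exp_log (by linarith),
    ← ENNReal.ofReal_natCast, ← ENNReal.ofReal_mul (by positivity)]
  refine ENNReal.ofReal_le_ofReal (le_of_eq ?_)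
  field_simp
  norm_num

end Concentration

section Occupancy

theorem isPolicy_normPolicy {S A : Type*} [Fintype A] [Nonempty A] {d : S → A → ℝ}
    (hd : ∀ s a, 0 ≤ d s a) :
    IsPolicy (normPolicy d) := by
  refine ⟨fun s a => ?_, fun s => ?_⟩
  · unfold normPolicy
    split_ifs with h
    · exact div_nonneg (hd s a) h.le
    · positivity
  · unfold normPolicy
    split_ifs with h
    · rw [← Finset.sum_div, div_self h.ne']
    · simp

theorem sum_mul_normPolicy {S A : Type*} [Fintype A] {d : S → A → ℝ}
    (hd : ∀ s a, 0 ≤ d s a) (s : S) (a : A) :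
    d s a = (∑ a', d s a') * normPolicy d s a := by
  unfold normPolicy
  split_ifs with h
  · rw [mul_div_cancel₀ _ h.ne']
  · have h0 : ∑ a', d s a' = 0 :=
      le_antisymm (not_lt.1 h) (Finset.sum_nonneg fun a _ => hd s a)
    rw [h0, zero_mul]
    exact (Finset.sum_eq_zero_iff_of_nonneg fun a _ => hd s a).1 h0 a (Finset.mem_univ a)

theorem isPolicy_extractPolicy {S A : Type*} [Fintype A] [Nonempty A] {dD w : S → A → ℝ}
    (hd : ∀ s a, 0 ≤ dD s a)
    (hw : ∀ s a, 0 ≤ w s a) : IsPolicy (extractPolicy (behPolicy dD) w) :=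
  isPolicy_normPolicy (d := fun s a => w s a * behPolicy dD s a)
    fun s a => mul_nonneg (hw s a) ((isPolicy_normPolicy hd).1 s a)

theorem sum_dstar_mul_extractPolicy {S A : Type*} [Fintype A] [Nonempty A] {dD w : S → A → ℝ}
    (hd : ∀ s a, 0 ≤ dD s a) (hw : ∀ s a, 0 ≤ w s a) (s : S) (a : A) :
    dstar dD w s a = (∑ a', dstar dD w s a') * extractPolicy (behPolicy dD) w s a := by
  have hdec : ∀ a, dstar dD w s a = (∑ a', dD s a') * (w s a * behPolicy dD s a) := fun a => by
    rw [dstar, sum_mul_normPolicy hd s a, behPolicy]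
    ring
  have hext : w s a * behPolicy dD s a
      = (∑ a', w s a' * behPolicy dD s a') * extractPolicy (behPolicy dD) w s a :=
    sum_mul_normPolicy (d := fun s a => w s a * behPolicy dD s a)
      (fun s a => mul_nonneg (hw s a) ((isPolicy_normPolicy hd).1 s a)) s a
  simp_rw [hdec, ← Finset.mul_sum]
  rw [hext]
  ring

variable {P : S → A → S → ℝ} {r : S → A → ℝ} {μ0 : S → ℝ} {γ : ℝ} {dD : S → A → ℝ}

theorem sum_saDist_mul_policy {π : S → A → ℝ} (hπ : IsPolicy π) (t : ℕ) (s : S) (a : A) :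
    saDist P μ0 π t s a = (∑ a', saDist P μ0 π t s a') * π s a := by
  cases t <;> simp only [saDist, ← Finset.mul_sum, hπ.2 s, mul_one]

theorem saDist_nonneg (hM : MDPAssumptions P r μ0 γ dD) {π : S → A → ℝ} (hπ : IsPolicy π)
    (t : ℕ) (s : S) (a : A) : 0 ≤ saDist P μ0 π t s a := by
  induction t generalizing s a with
  | zero => exact mul_nonneg (hM.μ0_pos s).le (hπ.1 s a)
  | succ t ih =>
    exact mul_nonneg (Finset.sum_nonneg fun s' _ => Finset.sum_nonneg fun a' _ =>
      mul_nonneg (ih s' a') (hM.P_nonneg s' a' s)) (hπ.1 s a)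

theorem sum_saDist (hM : MDPAssumptions P r μ0 γ dD) {π : S → A → ℝ} (hπ : IsPolicy π)
    (t : ℕ) : ∑ s, ∑ a, saDist P μ0 π t s a = 1 := by
  induction t with
  | zero => simp only [saDist, ← Finset.mul_sum, hπ.2, mul_one, hM.μ0_sum]
  | succ t ih =>
    simp only [saDist, ← Finset.mul_sum, hπ.2, mul_one]
    rw [Finset.sum_comm]
    simp_rw [Finset.sum_comm (s := (Finset.univ : Finset S)) (t := (Finset.univ : Finset A)),
      ← Finset.mul_sum, hM.P_sum, mul_one]
    rw [Finset.sum_comm, ih]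

theorem summable_saDist (hM : MDPAssumptions P r μ0 γ dD) {π : S → A → ℝ} (hπ : IsPolicy π)
    (s : S) (a : A) : Summable fun t => γ ^ t * saDist P μ0 π t s a := by
  refine Summable.of_nonneg_of_le
    (fun t => mul_nonneg (pow_nonneg hM.γ_nonneg t) (saDist_nonneg hM hπ t s a))
    (fun t => ?_) (summable_geometric_of_lt_one hM.γ_nonneg hM.γ_lt_one)
  refine mul_le_of_le_one_right (pow_nonneg hM.γ_nonneg t) ?_
  rw [← sum_saDist hM hπ t]
  exact (Finset.single_le_sum (f := fun a => saDist P μ0 π t s a)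
      (fun a _ => saDist_nonneg hM hπ t s a) (Finset.mem_univ a)).trans
    (Finset.single_le_sum (f := fun s => ∑ a, saDist P μ0 π t s a)
      (fun s _ => Finset.sum_nonneg fun a _ => saDist_nonneg hM hπ t s a) (Finset.mem_univ s))

theorem sum_occ (hM : MDPAssumptions P r μ0 γ dD) {π : S → A → ℝ} (hπ : IsPolicy π) (s : S) :
    ∑ a, occ P μ0 γ π s a = (1 - γ) * ∑' t, γ ^ t * ∑ a, saDist P μ0 π t s a := by
  simp only [occ]
  rw [← Finset.mul_sum, ← Summable.tsum_finsetSum fun a _ => summable_saDist hM hπ s a]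
  simp_rw [Finset.mul_sum]

theorem sum_occ_mul_policy (hM : MDPAssumptions P r μ0 γ dD) {π : S → A → ℝ}
    (hπ : IsPolicy π) (s : S) (a : A) :
    occ P μ0 γ π s a = (∑ a', occ P μ0 γ π s a') * π s a := by
  rw [sum_occ hM hπ, mul_assoc, ← tsum_mul_right, occ]
  congr 2
  ext t
  rw [sum_saDist_mul_policy hπ t s a, mul_assoc]

theorem bellmanFlow_occ (hM : MDPAssumptions P r μ0 γ dD) {π : S → A → ℝ}
    (hπ : IsPolicy π) : BellmanFlow P μ0 γ (occ P μ0 γ π) := by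
  intro s
  have hsum : Summable fun t => γ ^ t * ∑ a, saDist P μ0 π t s a := by
    simp_rw [Finset.mul_sum]
    exact summable_sum fun a _ => summable_saDist hM hπ s a
  have hstep : ∀ t, γ ^ (t + 1) * ∑ a, saDist P μ0 π (t + 1) s a
      = γ * ∑ s', ∑ a', P s' a' s * (γ ^ t * saDist P μ0 π t s' a') := fun t => by
    simp only [saDist, ← Finset.mul_sum, hπ.2 s, mul_one]
    rw [pow_succ', mul_assoc, Finset.mul_sum]
    congr 1
    refine Finset.sum_congr rfl fun s' _ => ?_
    rw [Finset.mul_sum]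
    exact Finset.sum_congr rfl fun a' _ => by ring
  have hsm : ∀ s' a', Summable fun t => P s' a' s * (γ ^ t * saDist P μ0 π t s' a') :=
    fun s' a' => (summable_saDist hM hπ s' a').mul_left _
  rw [sum_occ hM hπ, hsum.tsum_eq_zero_add]
  simp_rw [hstep]
  rw [tsum_mul_left, Summable.tsum_finsetSum fun s' _ => summable_sum fun a' _ => hsm s' a']
  simp_rw [Summable.tsum_finsetSum fun a' _ => hsm _ a', tsum_mul_left, occ]
  simp only [saDist, ← Finset.mul_sum, hπ.2 s, mul_one, pow_zero, one_mul]
  rw [mul_add]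
  congr 1
  rw [mul_left_comm]
  congr 1
  rw [Finset.mul_sum]
  refine Finset.sum_congr rfl fun s' _ => ?_
  rw [Finset.mul_sum]
  exact Finset.sum_congr rfl fun a' _ => by ring

/-- Two solutions of the Bellman flow equations are `L¹`-close when the policies that they
induce are close on average. -/
theorem l1_sub_le_expL1 (hM : MDPAssumptions P r μ0 γ dD) {d d' π π' : S → A → ℝ}
    (hd : ∀ s a, 0 ≤ d s a) (hflow : BellmanFlow P μ0 γ d) (hflow' : BellmanFlow P μ0 γ d')
    (hdπ : ∀ s a, d s a = (∑ a', d s a') * π s a)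
    (hdπ' : ∀ s a, d' s a = (∑ a', d' s a') * π' s a) (hπ' : IsPolicy π') :
    (1 - γ) * ∑ s, ∑ a, |d s a - d' s a| ≤ expL1 d π π' := by
  have hmarg : ∑ s, |∑ a, d s a - ∑ a, d' s a| ≤ γ * ∑ s, ∑ a, |d s a - d' s a| := by
    have hs : ∀ s, |∑ a, d s a - ∑ a, d' s a|
        ≤ γ * ∑ s', ∑ a', |d s' a' - d' s' a'| * P s' a' s := fun s => by
      have heq : ∑ a, d s a - ∑ a, d' s a
          = γ * ∑ s', ∑ a', (d s' a' - d' s' a') * P s' a' s := by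
        rw [hflow s, hflow' s, add_sub_add_left_eq_sub, ← mul_sub, ← Finset.sum_sub_distrib]
        simp_rw [← Finset.sum_sub_distrib]
        congr 1
        exact Finset.sum_congr rfl fun s' _ => Finset.sum_congr rfl fun a' _ => by ring
      rw [heq, abs_mul, abs_of_nonneg hM.γ_nonneg]
      refine mul_le_mul_of_nonneg_left ?_ hM.γ_nonneg
      refine (Finset.abs_sum_le_sum_abs _ _).trans (Finset.sum_le_sum fun s' _ => ?_)
      refine (Finset.abs_sum_le_sum_abs _ _).trans (Finset.sum_le_sum fun a' _ => ?_)
      rw [abs_mul, abs_of_nonneg (hM.P_nonneg s' a' s)]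
    refine (Finset.sum_le_sum fun s _ => hs s).trans (le_of_eq ?_)
    rw [← Finset.mul_sum, Finset.sum_comm]
    congr 1
    refine Finset.sum_congr rfl fun s' _ => ?_
    rw [Finset.sum_comm]
    refine Finset.sum_congr rfl fun a' _ => ?_
    rw [← Finset.mul_sum, hM.P_sum, mul_one]
  have hs : ∀ s, ∑ a, |d s a - d' s a|
      ≤ (∑ a, d s a) * l1Pol π π' s + |∑ a, d s a - ∑ a, d' s a| := fun s => by
    have h0 : 0 ≤ ∑ a, d s a := Finset.sum_nonneg fun a _ => hd s a
    have ha : ∀ a, |d s a - d' s a| ≤ (∑ a, d s a) * |π s a - π' s a|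
        + |∑ a, d s a - ∑ a, d' s a| * π' s a := fun a => by
      have heq : d s a - d' s a = (∑ a, d s a) * (π s a - π' s a)
          + (∑ a, d s a - ∑ a, d' s a) * π' s a := by
        linear_combination hdπ s a - hdπ' s a
      rw [heq]
      refine (abs_add_le _ _).trans (le_of_eq ?_)
      rw [abs_mul, abs_mul, abs_of_nonneg h0, abs_of_nonneg (hπ'.1 s a)]
    refine (Finset.sum_le_sum fun a _ => ha a).trans (le_of_eq ?_)
    rw [Finset.sum_add_distrib, ← Finset.mul_sum, ← Finset.mul_sum, hπ'.2 s, mul_one, l1Pol]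
  have htot := Finset.sum_le_sum fun s (_ : s ∈ Finset.univ) => hs s
  rw [Finset.sum_add_distrib] at htot
  rw [expL1]
  linarith

/-- A nonnegative solution of the Bellman flow equations is the occupancy of its policy. -/
theorem occ_normPolicy_eq [Nonempty A] (hM : MDPAssumptions P r μ0 γ dD) {d : S → A → ℝ}
    (hd : ∀ s a, 0 ≤ d s a) (hflow : BellmanFlow P μ0 γ d) (s : S) (a : A) :
    occ P μ0 γ (normPolicy d) s a = d s a := by
  have hπ := isPolicy_normPolicy hd
  have hle := l1_sub_le_expL1 hM hd hflow (bellmanFlow_occ hM hπ) (sum_mul_normPolicy hd)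
    (sum_occ_mul_policy hM hπ) hπ
  have h0 : expL1 d (normPolicy d) (normPolicy d) = 0 := by simp [expL1, l1Pol]
  rw [h0] at hle
  have hnn : ∀ s, 0 ≤ ∑ a, |d s a - occ P μ0 γ (normPolicy d) s a| :=
    fun s => Finset.sum_nonneg fun a _ => abs_nonneg _
  have hsum : ∑ s, ∑ a, |d s a - occ P μ0 γ (normPolicy d) s a| = 0 :=
    le_antisymm (nonpos_of_mul_nonpos_right hle (sub_pos.2 hM.γ_lt_one))
      (Finset.sum_nonneg fun s _ => hnn s)
  have hsum' := (Finset.sum_eq_zero_iff_of_nonneg fun s _ => hnn s).1 hsum s (Finset.mem_univ s)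
  have := (Finset.sum_eq_zero_iff_of_nonneg fun a _ => abs_nonneg _).1 hsum' a
    (Finset.mem_univ a)
  linarith [abs_eq_zero.1 this]

theorem Jret_sub_le_expL1 [Nonempty A] (hM : MDPAssumptions P r μ0 γ dD) {d : S → A → ℝ}
    (hd : ∀ s a, 0 ≤ d s a) (hflow : BellmanFlow P μ0 γ d) {π : S → A → ℝ} (hπ : IsPolicy π) :
    Jret P r μ0 γ (normPolicy d) - Jret P r μ0 γ π
      ≤ 1 / (1 - γ) * expL1 d (normPolicy d) π := by
  have hle := l1_sub_le_expL1 hM hd hflow (bellmanFlow_occ hM hπ) (sum_mul_normPolicy hd)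
    (sum_occ_mul_policy hM hπ) hπ
  rw [one_div_mul_eq_div, le_div_iff₀ (sub_pos.2 hM.γ_lt_one), mul_comm]
  refine le_trans (mul_le_mul_of_nonneg_left ?_ (sub_pos.2 hM.γ_lt_one).le) hle
  simp_rw [Jret, occ_normPolicy_eq hM hd hflow, ← Finset.sum_sub_distrib, ← sub_mul]
  refine Finset.sum_le_sum fun s _ => Finset.sum_le_sum fun a _ => ?_
  calc (d s a - occ P μ0 γ π s a) * r s a ≤ |d s a - occ P μ0 γ π s a| * r s a :=
        mul_le_mul_of_nonneg_right (le_abs_self _) (hM.r_nonneg s a)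
    _ ≤ |d s a - occ P μ0 γ π s a| :=
        mul_le_of_le_one_right (abs_nonneg _) (hM.r_le_one s a)

theorem l1_le_l2nrm (hM : MDPAssumptions P r μ0 γ dD) (g : S → A → ℝ) :
    ∑ s, ∑ a, dD s a * |g s a| ≤ l2nrm dD g := by
  refine Real.le_sqrt_of_sq_le ?_
  have hcs := Finset.sum_sq_le_sum_mul_sum_of_sq_le_mul (Finset.univ : Finset (S × A))
    (r := fun x => dD x.1 x.2 * |g x.1 x.2|) (f := fun x => dD x.1 x.2)
    (g := fun x => dD x.1 x.2 * g x.1 x.2 ^ 2) (fun x _ => hM.dD_nonneg _ _)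
    (fun x _ => mul_nonneg (hM.dD_nonneg _ _) (sq_nonneg _))
    (fun x _ => le_of_eq (by rw [mul_pow, sq_abs]; ring))
  simp_rw [Fintype.sum_prod_type, hM.dD_sum, one_mul] at hcs
  exact hcs

/-- Extracted policies are close on average when the density ratios are close in `L²`. -/
theorem expL1_le_l2nrm [Nonempty A] (hM : MDPAssumptions P r μ0 γ dD) {w w' : S → A → ℝ}
    (hw : ∀ s a, 0 ≤ w s a) (hw' : ∀ s a, 0 ≤ w' s a) :
    expL1 (dstar dD w) (normPolicy (dstar dD w)) (extractPolicy (behPolicy dD) w')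
      ≤ 2 * l2nrm dD fun s a => w' s a - w s a := by
  have hd : ∀ s a, 0 ≤ dstar dD w s a := fun s a => mul_nonneg (hw s a) (hM.dD_nonneg s a)
  have hπ := isPolicy_extractPolicy hM.dD_nonneg hw'
  refine le_trans ?_ (mul_le_mul_of_nonneg_left (l1_le_l2nrm hM _) zero_le_two)
  rw [expL1, Finset.mul_sum]
  refine Finset.sum_le_sum fun s _ => ?_
  set π := normPolicy (dstar dD w)
  set π' := extractPolicy (behPolicy dD) w'
  have h0 : 0 ≤ ∑ a, dstar dD w s a := Finset.sum_nonneg fun a _ => hd s a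
  have habs : ∀ a, |dstar dD w' s a - dstar dD w s a| = dD s a * |w' s a - w s a| := fun a => by
    rw [dstar, dstar, ← sub_mul, abs_mul, abs_of_nonneg (hM.dD_nonneg s a), mul_comm]
  have ha : ∀ a, (∑ a, dstar dD w s a) * |π s a - π' s a|
      ≤ dD s a * |w' s a - w s a| + (∑ a, dD s a * |w' s a - w s a|) * π' s a := fun a => by
    have heq : (∑ a, dstar dD w s a) * (π s a - π' s a)
        = -(dstar dD w' s a - dstar dD w s a)
          + (∑ a, (dstar dD w' s a - dstar dD w s a)) * π' s a := by
      rw [Finset.sum_sub_distrib]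
      linear_combination sum_dstar_mul_extractPolicy hM.dD_nonneg hw' s a
        - sum_mul_normPolicy hd s a
    calc (∑ a, dstar dD w s a) * |π s a - π' s a|
        = |-(dstar dD w' s a - dstar dD w s a)
          + (∑ a, (dstar dD w' s a - dstar dD w s a)) * π' s a| := by
          rw [← heq, abs_mul, abs_of_nonneg h0]
      _ ≤ |-(dstar dD w' s a - dstar dD w s a)|
          + |(∑ a, (dstar dD w' s a - dstar dD w s a)) * π' s a| := abs_add_le _ _
      _ ≤ _ := ?_
    rw [abs_neg, habs, abs_mul, abs_of_nonneg (hπ.1 s a)]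
    refine add_le_add_right (mul_le_mul_of_nonneg_right ?_ (hπ.1 s a)) _
    refine (Finset.abs_sum_le_sum_abs _ _).trans (le_of_eq ?_)
    exact Finset.sum_congr rfl fun a _ => habs a
  rw [l1Pol, Finset.mul_sum]
  refine (Finset.sum_le_sum fun a _ => ha a).trans (le_of_eq ?_)
  rw [Finset.sum_add_distrib, ← Finset.mul_sum, hπ.2 s]
  ring

end Occupancy

section Lagrangian

variable {P : S → A → S → ℝ} {r : S → A → ℝ} {μ0 : S → ℝ} {γ : ℝ} {dD : S → A → ℝ}
  {f f' : ℝ → ℝ} {α : ℝ}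

/-- The Lagrangian is affine in `v`, with slope the defect in the Bellman flow equations. -/
theorem Lag_sub_left (v v' : S → ℝ) (w : S → A → ℝ) :
    Lag P r μ0 γ dD f α v' w - Lag P r μ0 γ dD f α v w
      = ∑ s, (v' s - v s) * ((1 - γ) * μ0 s
        + γ * ∑ s', ∑ a', P s' a' s * dstar dD w s' a' - ∑ a, dstar dD w s a) := by
  have hswap : ∑ s, (v' s - v s) * ∑ s', ∑ a', P s' a' s * dstar dD w s' a'
      = ∑ s', ∑ a', dD s' a' * (w s' a' * ∑ s, P s' a' s * (v' s - v s)) := by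
    simp_rw [Finset.mul_sum]
    rw [Finset.sum_comm]
    refine Finset.sum_congr rfl fun s' _ => ?_
    rw [Finset.sum_comm]
    exact Finset.sum_congr rfl fun a' _ => Finset.sum_congr rfl fun s _ => by
      simp only [dstar]; ring
  have hmarg : ∑ s, (v' s - v s) * ∑ a, dstar dD w s a
      = ∑ s, ∑ a, dD s a * (w s a * (v' s - v s)) := by
    simp_rw [Finset.mul_sum]
    exact Finset.sum_congr rfl fun s _ => Finset.sum_congr rfl fun a _ => by
      simp only [dstar]; ring
  have hrhs : ∑ s, (v' s - v s) * ((1 - γ) * μ0 s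
        + γ * ∑ s', ∑ a', P s' a' s * dstar dD w s' a' - ∑ a, dstar dD w s a)
      = (1 - γ) * ∑ s, μ0 s * (v' s - v s)
        + γ * ∑ s, (v' s - v s) * ∑ s', ∑ a', P s' a' s * dstar dD w s' a'
        - ∑ s, (v' s - v s) * ∑ a, dstar dD w s a := by
    rw [Finset.mul_sum, Finset.mul_sum, ← Finset.sum_add_distrib, ← Finset.sum_sub_distrib]
    exact Finset.sum_congr rfl fun s _ => by ring
  have hlhs : ∑ s, ∑ a, dD s a * (w s a * eV P r γ v' s a)
        - ∑ s, ∑ a, dD s a * (w s a * eV P r γ v s a)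
      = γ * ∑ s, ∑ a, dD s a * (w s a * ∑ s', P s a s' * (v' s' - v s'))
        - ∑ s, ∑ a, dD s a * (w s a * (v' s - v s)) := by
    simp only [Finset.mul_sum _ _ γ, ← Finset.sum_sub_distrib]
    refine Finset.sum_congr rfl fun s _ => Finset.sum_congr rfl fun a _ => ?_
    simp_rw [mul_sub (P s a _), Finset.sum_sub_distrib, eV]
    ring
  rw [hrhs, hswap, hmarg]
  simp_rw [mul_sub (μ0 _), Finset.sum_sub_distrib]
  simp only [Lag]
  linear_combination hlhs

theorem bellmanFlow_of_isSaddle {v : S → ℝ} {w : S → A → ℝ}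
    (h : IsSaddle P r μ0 γ dD f α v w) : BellmanFlow P μ0 γ (dstar dD w) := by
  set c : S → ℝ := fun s => (1 - γ) * μ0 s
    + γ * ∑ s', ∑ a', P s' a' s * dstar dD w s' a' - ∑ a, dstar dD w s a with hc
  have hle := h.2.1 fun s => v s - c s
  have hdiff := Lag_sub_left (P := P) (r := r) (μ0 := μ0) (γ := γ) (dD := dD) (f := f) (α := α)
    v (fun s => v s - c s) w
  have hsq : ∑ s, (v s - c s - v s) * c s = -∑ s, c s ^ 2 := by
    rw [← Finset.sum_neg_distrib]
    exact Finset.sum_congr rfl fun s _ => by ring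
  have hzero : ∑ s, c s ^ 2 = 0 :=
    le_antisymm (by linarith) (Finset.sum_nonneg fun s _ => sq_nonneg _)
  intro s
  have := (Finset.sum_eq_zero_iff_of_nonneg fun s _ => sq_nonneg (c s)).1 hzero s
    (Finset.mem_univ s)
  have := pow_eq_zero_iff two_ne_zero |>.1 this
  simp only [hc] at this
  linarith

theorem Lag_eq_of_bellmanFlow {w : S → A → ℝ} (h : BellmanFlow P μ0 γ (dstar dD w))
    (v v' : S → ℝ) : Lag P r μ0 γ dD f α v' w = Lag P r μ0 γ dD f α v w := by
  have hdiff := Lag_sub_left (P := P) (r := r) (μ0 := μ0) (γ := γ) (dD := dD) (f := f) (α := α)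
    v v' w
  have h0 : ∀ s, (1 - γ) * μ0 s + γ * ∑ s', ∑ a', P s' a' s * dstar dD w s' a'
      - ∑ a, dstar dD w s a = 0 := fun s => by rw [h s, sub_self]
  simp only [h0, mul_zero, Finset.sum_const_zero] at hdiff
  linarith

theorem Lag_sub_left_le (hM : MDPAssumptions P r μ0 γ dD) {Bw : ℝ} {w : S → A → ℝ}
    (hw : ∀ s a, 0 ≤ w s a ∧ w s a ≤ Bw) (hBw : 0 ≤ Bw) (v v' : S → ℝ) :
    Lag P r μ0 γ dD f α v' w - Lag P r μ0 γ dD f α v w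
      ≤ (Bw + 1) * ((∑ s, μ0 s * |v' s - v s|) + (∑ s, (∑ a, dD s a) * |v' s - v s|)
        + ∑ s, (∑ s', ∑ a', dD s' a' * P s' a' s) * |v' s - v s|) := by
  rw [Lag_sub_left, ← Finset.sum_add_distrib, ← Finset.sum_add_distrib, Finset.mul_sum]
  refine Finset.sum_le_sum fun s _ => ?_
  have hd : ∀ s a, 0 ≤ dstar dD w s a ∧ dstar dD w s a ≤ Bw * dD s a := fun s a =>
    ⟨mul_nonneg (hw s a).1 (hM.dD_nonneg s a),
      mul_le_mul_of_nonneg_right (hw s a).2 (hM.dD_nonneg s a)⟩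
  have hnext0 : 0 ≤ ∑ s', ∑ a', P s' a' s * dstar dD w s' a' := Finset.sum_nonneg fun s' _ =>
    Finset.sum_nonneg fun a' _ => mul_nonneg (hM.P_nonneg s' a' s) (hd s' a').1
  have hnext : ∑ s', ∑ a', P s' a' s * dstar dD w s' a'
      ≤ Bw * ∑ s', ∑ a', dD s' a' * P s' a' s := by
    simp_rw [Finset.mul_sum]
    refine Finset.sum_le_sum fun s' _ => Finset.sum_le_sum fun a' _ => ?_
    exact (mul_le_mul_of_nonneg_left (hd s' a').2 (hM.P_nonneg s' a' s)).trans
      (le_of_eq (by ring))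
  have hmarg0 : 0 ≤ ∑ a, dstar dD w s a := Finset.sum_nonneg fun a _ => (hd s a).1
  have hmarg : ∑ a, dstar dD w s a ≤ Bw * ∑ a, dD s a := by
    rw [Finset.mul_sum]
    exact Finset.sum_le_sum fun a _ => (hd s a).2
  have hq0 : 0 ≤ ∑ s', ∑ a', dD s' a' * P s' a' s := Finset.sum_nonneg fun s' _ =>
    Finset.sum_nonneg fun a' _ => mul_nonneg (hM.dD_nonneg s' a') (hM.P_nonneg s' a' s)
  have hm0 : 0 ≤ ∑ a, dD s a := Finset.sum_nonneg fun a _ => hM.dD_nonneg s a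
  have hμ := (hM.μ0_pos s).le
  have hγ := hM.γ_nonneg
  have hγ1 : 0 ≤ 1 - γ := (sub_pos.2 hM.γ_lt_one).le
  set N := ∑ s', ∑ a', P s' a' s * dstar dD w s' a'
  set Q := ∑ s', ∑ a', dD s' a' * P s' a' s
  set m := ∑ a, dstar dD w s a
  set k := ∑ a, dD s a
  have hγN : γ * N ≤ N := mul_le_of_le_one_left hnext0 hM.γ_lt_one.le
  have hγN0 : 0 ≤ γ * N := mul_nonneg hγ hnext0
  have hμ1 : (1 - γ) * μ0 s ≤ μ0 s := mul_le_of_le_one_left hμ (by linarith)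
  have hμ0 : 0 ≤ (1 - γ) * μ0 s := mul_nonneg hγ1 hμ
  have hBμ : 0 ≤ Bw * μ0 s := mul_nonneg hBw hμ
  have hBk : 0 ≤ Bw * k := mul_nonneg hBw hm0
  have hBQ : 0 ≤ Bw * Q := mul_nonneg hBw hq0
  have habs : |(1 - γ) * μ0 s + γ * N - m| ≤ (Bw + 1) * (μ0 s + k + Q) := by
    rw [abs_le]; constructor <;> linarith
  calc (v' s - v s) * ((1 - γ) * μ0 s + γ * N - m)
      ≤ |v' s - v s| * |(1 - γ) * μ0 s + γ * N - m| := by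
        rw [← abs_mul]; exact le_abs_self _
    _ ≤ |v' s - v s| * ((Bw + 1) * (μ0 s + k + Q)) :=
        mul_le_mul_of_nonneg_left habs (abs_nonneg _)
    _ = _ := by ring

theorem abs_eV_le (hM : MDPAssumptions P r μ0 γ dD) {Bv : ℝ} {v : S → ℝ}
    (hv : ∀ s, |v s| ≤ Bv) (s : S) (a : A) : |eV P r γ v s a| ≤ (1 + γ) * Bv + 1 := by
  have hP : |∑ s', P s a s' * v s'| ≤ Bv := by
    refine (Finset.abs_sum_le_sum_abs _ _).trans ?_
    calc ∑ s', |P s a s' * v s'| ≤ ∑ s', P s a s' * Bv := Finset.sum_le_sum fun s' _ => by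
          rw [abs_mul, abs_of_nonneg (hM.P_nonneg s a s')]
          exact mul_le_mul_of_nonneg_left (hv s') (hM.P_nonneg s a s')
      _ = Bv := by rw [← Finset.sum_mul, hM.P_sum, one_mul]
  have h1 := mul_le_mul_of_nonneg_left (abs_le.1 hP).1 hM.γ_nonneg
  have h2 := mul_le_mul_of_nonneg_left (abs_le.1 hP).2 hM.γ_nonneg
  have hvs := abs_le.1 (hv s)
  have hr0 := hM.r_nonneg s a
  have hr1 := hM.r_le_one s a
  rw [eV, abs_le]
  constructor <;> linarith

theorem abs_sub_le_of_regAssumptions {Mf Bw Bf' Bf : ℝ} (hreg : RegAssumptions f f' Mf Bw Bf' Bf)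
    {x y : ℝ} (hx : x ∈ Set.Icc 0 Bw) (hy : y ∈ Set.Icc 0 Bw) :
    |f y - f x| ≤ Bf' * |y - x| :=
  (convex_Icc 0 Bw).norm_image_sub_le_of_norm_hasDerivWithin_le
    (fun z _ => (hreg.deriv z).hasDerivWithinAt) (fun z hz => hreg.f'_bdd z hz.1 hz.2) hx hy

theorem Lag_sub_right_le (hM : MDPAssumptions P r μ0 γ dD) (hα : 0 < α) {Mf Bw Bf' Bf Bv : ℝ}
    (hreg : RegAssumptions f f' Mf Bw Bf' Bf) {v : S → ℝ} (hv : ∀ s, |v s| ≤ Bv)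
    {w w' : S → A → ℝ} (hw : ∀ s a, 0 ≤ w s a ∧ w s a ≤ Bw) (hw' : ∀ s a, 0 ≤ w' s a)
    (hw'B : ∀ s a, dstar dD w' s a ≤ Bw * dD s a) :
    Lag P r μ0 γ dD f α v w' - Lag P r μ0 γ dD f α v w
      ≤ ((1 + γ) * Bv + 1 + α * Bf') * ∑ s, ∑ a, dD s a * |w s a - w' s a| := by
  have heq : Lag P r μ0 γ dD f α v w' - Lag P r μ0 γ dD f α v w
      = ∑ s, ∑ a, dD s a * ((w' s a - w s a) * eV P r γ v s a
        - α * (f (w' s a) - f (w s a))) := by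
    have hsplit : ∑ s, ∑ a, dD s a * ((w' s a - w s a) * eV P r γ v s a
          - α * (f (w' s a) - f (w s a)))
        = (∑ s, ∑ a, dD s a * (w' s a * eV P r γ v s a)
            - ∑ s, ∑ a, dD s a * (w s a * eV P r γ v s a))
          - α * (∑ s, ∑ a, dD s a * f (w' s a) - ∑ s, ∑ a, dD s a * f (w s a)) := by
      simp only [Finset.mul_sum, ← Finset.sum_sub_distrib]
      exact Finset.sum_congr rfl fun s _ => Finset.sum_congr rfl fun a _ => by ring
    rw [hsplit, Lag, Lag]
    ring
  rw [heq]
  simp_rw [Finset.mul_sum]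
  refine Finset.sum_le_sum fun s _ => Finset.sum_le_sum fun a _ => ?_
  rcases (hM.dD_nonneg s a).eq_or_lt with h0 | hpos
  · rw [← h0]; simp
  have hwB : w' s a ≤ Bw := le_of_mul_le_mul_right (hw'B s a) hpos
  have hf := abs_sub_le_of_regAssumptions hreg ⟨(hw s a).1, (hw s a).2⟩ ⟨hw' s a, hwB⟩
  have he := abs_eV_le hM hv s a
  rw [mul_left_comm]
  refine mul_le_mul_of_nonneg_left ?_ hpos.le
  have h1 : (w' s a - w s a) * eV P r γ v s a ≤ |w' s a - w s a| * ((1 + γ) * Bv + 1) := by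
    refine (le_abs_self _).trans ?_
    rw [abs_mul]
    exact mul_le_mul_of_nonneg_left he (abs_nonneg _)
  have h2 := mul_le_mul_of_nonneg_left ((neg_le_abs _).trans hf) hα.le
  rw [abs_sub_comm (w s a)]
  linarith

/-- Quadratic growth of the Lagrangian around the primal part of a saddle point. -/
theorem sum_sq_le_Lag_sub (hM : MDPAssumptions P r μ0 γ dD) (hα : 0 < α) {Mf : ℝ}
    (hf : StrongConvexOn Set.univ Mf f) {v : S → ℝ} {w : S → A → ℝ}
    (h : IsSaddle P r μ0 γ dD f α v w) {w' : S → A → ℝ} (hw' : ∀ s a, 0 ≤ w' s a) :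
    α * Mf / 2 * ∑ s, ∑ a, dD s a * (w' s a - w s a) ^ 2
      ≤ Lag P r μ0 γ dD f α v w - Lag P r μ0 γ dD f α v w' := by
  set N := ∑ s, ∑ a, dD s a * (w' s a - w s a) ^ 2 with hN
  have hmix : ∀ t ∈ Set.Ioo (0 : ℝ) 1, α * Mf / 2 * N * (1 - t)
      ≤ Lag P r μ0 γ dD f α v w - Lag P r μ0 γ dD f α v w' := by
    rintro t ⟨ht0, ht1⟩
    have hopt := h.2.2 (fun s a => (1 - t) * w s a + t * w' s a) fun s a =>
      add_nonneg (mul_nonneg (by linarith) (h.1 s a)) (mul_nonneg ht0.le (hw' s a))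
    have hconv : ∑ s, ∑ a, dD s a * f ((1 - t) * w s a + t * w' s a)
        ≤ (1 - t) * ∑ s, ∑ a, dD s a * f (w s a) + t * ∑ s, ∑ a, dD s a * f (w' s a)
          - (1 - t) * t * (Mf / 2) * N := by
      simp only [hN, Finset.mul_sum, ← Finset.sum_sub_distrib, ← Finset.sum_add_distrib]
      refine Finset.sum_le_sum fun s _ => Finset.sum_le_sum fun a _ => ?_
      have := hf.2 (Set.mem_univ (w s a)) (Set.mem_univ (w' s a))
        (sub_nonneg.2 ht1.le) ht0.le (sub_add_cancel 1 t)
      simp only [smul_eq_mul, Real.norm_eq_abs, sq_abs] at this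
      refine (mul_le_mul_of_nonneg_left this (hM.dD_nonneg s a)).trans (le_of_eq ?_)
      ring
    have hlin : ∑ s, ∑ a, dD s a * (((1 - t) * w s a + t * w' s a) * eV P r γ v s a)
        = (1 - t) * ∑ s, ∑ a, dD s a * (w s a * eV P r γ v s a)
          + t * ∑ s, ∑ a, dD s a * (w' s a * eV P r γ v s a) := by
      simp only [Finset.mul_sum, ← Finset.sum_add_distrib]
      exact Finset.sum_congr rfl fun s _ => Finset.sum_congr rfl fun a _ => by ring
    have hconv' := mul_le_mul_of_nonneg_left hconv hα.le
    simp only [Lag] at hopt ⊢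
    rw [hlin] at hopt
    refine le_of_mul_le_mul_left ?_ ht0
    linarith
  have hlim : Filter.Tendsto (fun t : ℝ => α * Mf / 2 * N * (1 - t)) (nhdsWithin 0 (Set.Ioi 0))
      (nhds (α * Mf / 2 * N)) := by
    have : Filter.Tendsto (fun t : ℝ => α * Mf / 2 * N * (1 - t)) (nhds 0)
        (nhds (α * Mf / 2 * N * (1 - 0))) := Continuous.tendsto (by fun_prop) 0
    rw [sub_zero, mul_one] at this
    exact this.mono_left nhdsWithin_le_nhds
  refine le_of_tendsto hlim ?_
  filter_upwards [Ioo_mem_nhdsGT (zero_lt_one (α := ℝ))] with t ht using hmix t ht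

end Lagrangian

section Estimation

theorem sqrt_add_le_sqrt_add_sqrt (x y : ℝ) : √(x + y) ≤ √x + √y := by
  have hsq : ∀ z : ℝ, z ≤ √z ^ 2 := fun z => by
    rcases le_total 0 z with hz | hz
    · rw [Real.sq_sqrt hz]
    · exact hz.trans (sq_nonneg _)
  refine Real.sqrt_le_iff.2 ⟨by positivity, ?_⟩
  nlinarith [hsq x, hsq y, mul_nonneg (Real.sqrt_nonneg x) (Real.sqrt_nonneg y)]

variable {P : S → A → S → ℝ} {r : S → A → ℝ} {μ0 : S → ℝ} {γ : ℝ} {dD : S → A → ℝ}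
  {f f' : ℝ → ℝ} {α : ℝ}

/-- The contribution of a single transition to the empirical Lagrangian. -/
noncomputable def sampleLag {S A : Type*} (r : S → A → ℝ) (γ : ℝ) (f : ℝ → ℝ) (α : ℝ)
    (v : S → ℝ) (w : S → A → ℝ) (x : (S × A) × S) : ℝ :=
  w x.1.1 x.1.2 * (r x.1.1 x.1.2 + γ * v x.2 - v x.1.1) - α * f (w x.1.1 x.1.2)

theorem empLag_eq {S A : Type*} {r : S → A → ℝ} {n n0 : ℕ} (D : Fin n → (S × A) × S)
    (D0 : Fin n0 → S) (v : S → ℝ) (w : S → A → ℝ) :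
    empLag r γ f α D D0 v w = (1 - γ) * ((n0 : ℝ)⁻¹ * ∑ j, v (D0 j))
      + (n : ℝ)⁻¹ * ∑ i, sampleLag r γ f α v w (D i) := by
  simp only [empLag, sampleLag, Finset.sum_sub_distrib, ← Finset.mul_sum]
  ring

theorem tupleWeight_nonneg (hM : MDPAssumptions P r μ0 γ dD) (x : (S × A) × S) :
    0 ≤ tupleWeight P dD x :=
  mul_nonneg (hM.dD_nonneg _ _) (hM.P_nonneg _ _ _)

theorem sum_tupleWeight (hM : MDPAssumptions P r μ0 γ dD) : ∑ x, tupleWeight P dD x = 1 := by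
  simp only [tupleWeight, Fintype.sum_prod_type, ← Finset.mul_sum, hM.P_sum, mul_one, hM.dD_sum]

theorem Lag_eq (hM : MDPAssumptions P r μ0 γ dD) (v : S → ℝ) (w : S → A → ℝ) :
    Lag P r μ0 γ dD f α v w = (1 - γ) * ∑ s, μ0 s * v s
      + ∑ x, tupleWeight P dD x * sampleLag r γ f α v w x := by
  have hsa : ∀ s a, ∑ s', tupleWeight P dD ((s, a), s') * sampleLag r γ f α v w ((s, a), s')
      = dD s a * (w s a * eV P r γ v s a) - α * (dD s a * f (w s a)) := fun s a => by
    calc ∑ s', tupleWeight P dD ((s, a), s') * sampleLag r γ f α v w ((s, a), s')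
        = ∑ s', (dD s a * (w s a * (r s a - v s) - α * f (w s a)) * P s a s'
          + dD s a * w s a * γ * (P s a s' * v s')) :=
          Finset.sum_congr rfl fun s' _ => by simp only [tupleWeight, sampleLag]; ring
      _ = _ := by
          rw [Finset.sum_add_distrib, ← Finset.mul_sum, ← Finset.mul_sum, hM.P_sum, eV]
          ring
  simp only [Fintype.sum_prod_type, hsa, Finset.sum_sub_distrib, ← Finset.mul_sum, Lag]
  ring

theorem abs_sampleLag_le (hM : MDPAssumptions P r μ0 γ dD) (hα : 0 < α)
    {Mf Bw Bf' Bf Bv : ℝ} (hreg : RegAssumptions f f' Mf Bw Bf' Bf) {v : S → ℝ}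
    (hv : ∀ s, |v s| ≤ Bv) {w : S → A → ℝ} (hw : ∀ s a, 0 ≤ w s a ∧ w s a ≤ Bw)
    (x : (S × A) × S) :
    |sampleLag r γ f α v w x| ≤ α * Bf + Bw * ((1 + γ) * Bv + 1) := by
  obtain ⟨⟨s, a⟩, s'⟩ := x
  have hγ := hM.γ_nonneg
  have he : |r s a + γ * v s' - v s| ≤ (1 + γ) * Bv + 1 := by
    have h1 := mul_le_mul_of_nonneg_left (abs_le.1 (hv s')).1 hγ
    have h2 := mul_le_mul_of_nonneg_left (abs_le.1 (hv s')).2 hγ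
    have hvs := abs_le.1 (hv s)
    have hr0 := hM.r_nonneg s a
    have hr1 := hM.r_le_one s a
    rw [abs_le]
    constructor <;> linarith
  have hf := mul_le_mul_of_nonneg_left (hreg.f_bdd _ (hw s a).1 (hw s a).2) hα.le
  have hwe : |w s a * (r s a + γ * v s' - v s)| ≤ Bw * ((1 + γ) * Bv + 1) := by
    rw [abs_mul, abs_of_nonneg (hw s a).1]
    exact mul_le_mul (hw s a).2 he (abs_nonneg _) ((hw s a).1.trans (hw s a).2)
  calc |sampleLag r γ f α v w ((s, a), s')|
      ≤ |w s a * (r s a + γ * v s' - v s)| + |α * f (w s a)| := abs_sub _ _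
    _ ≤ α * Bf + Bw * ((1 + γ) * Bv + 1) := by
        rw [abs_mul α, abs_of_pos hα]; linarith

/-- Uniform concentration of the empirical Lagrangian around the Lagrangian. -/
theorem le_dataMeasure_abs_empLag_sub_le [MeasurableSpace S] [MeasurableSpace A]
    [MeasurableSingletonClass S] [MeasurableSingletonClass A]
    (hM : MDPAssumptions P r μ0 γ dD) (hα : 0 < α) {δ : ℝ} (hδ0 : 0 < δ) (hδ1 : δ < 1)
    {Mf Bw Bf' Bf Bv : ℝ} (hreg : RegAssumptions f f' Mf Bw Bf' Bf)
    {V : Finset (S → ℝ)} {W : Finset (S → A → ℝ)} (hV : V.Nonempty) (hW : W.Nonempty)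
    (hWB : ∀ w ∈ W, ∀ s a, 0 ≤ w s a ∧ w s a ≤ Bw) (hVB : ∀ v ∈ V, ∀ s, |v s| ≤ Bv)
    {n n0 : ℕ} (hn : 0 < n) (hn0 : 0 < n0) :
    1 - ENNReal.ofReal δ ≤ dataMeasure P dD μ0 n n0 {ω | ∀ v ∈ V, ∀ w ∈ W,
      |empLag r γ f α ω.1 ω.2 v w - Lag P r μ0 γ dD f α v w|
        ≤ epsStat γ α Bv Bf Bw ((1 + γ) * Bv + 1) δ V.card W.card n n0} := by
  have hμ0 : ∀ s, 0 ≤ μ0 s := fun s => (hM.μ0_pos s).le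
  have := isProbabilityMeasure_discMeasure hμ0 hM.μ0_sum
  have := isProbabilityMeasure_discMeasure (tupleWeight_nonneg hM) (sum_tupleWeight hM)
  have hbad0 := measure_exists_abs_mean_sub_gt_le hμ0 hM.μ0_sum hV (g := fun v s => v s)
    hVB hn0 hδ0 hδ1
  have hbad := measure_exists_abs_mean_sub_gt_le (tupleWeight_nonneg hM) (sum_tupleWeight hM)
    (hV.product hW) (g := fun t x => sampleLag r γ f α t.1 t.2 x)
    (c := α * Bf + Bw * ((1 + γ) * Bv + 1))
    (fun t ht x => abs_sampleLag_le hM hα hreg (hVB t.1 (Finset.mem_product.1 ht).1)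
      (hWB t.2 (Finset.mem_product.1 ht).2) x) hn hδ0 hδ1
  set bad0 := {D0 : Fin n0 → S | ∃ v ∈ V, Bv * √(2 * Real.log (4 * V.card / δ) / n0)
    < |(n0 : ℝ)⁻¹ * ∑ j, v (D0 j) - ∑ s, μ0 s * v s|} with hbad0_def
  set bad := {D : Fin n → (S × A) × S | ∃ t ∈ V ×ˢ W, (α * Bf + Bw * ((1 + γ) * Bv + 1))
      * √(2 * Real.log (4 * (V ×ˢ W).card / δ) / n)
    < |(n : ℝ)⁻¹ * ∑ i, sampleLag r γ f α t.1 t.2 (D i)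
      - ∑ x, tupleWeight P dD x * sampleLag r γ f α t.1 t.2 x|} with hbad_def
  have hcompl : (bad ×ˢ Set.univ ∪ Set.univ ×ˢ bad0)ᶜ ⊆ {ω | ∀ v ∈ V, ∀ w ∈ W,
      |empLag r γ f α ω.1 ω.2 v w - Lag P r μ0 γ dD f α v w|
        ≤ epsStat γ α Bv Bf Bw ((1 + γ) * Bv + 1) δ V.card W.card n n0} := by
    rintro ⟨D, D0⟩ hω v hv w hw
    simp only [Set.mem_compl_iff, Set.mem_union, Set.mem_prod, Set.mem_univ, and_true, true_and,
      not_or] at hω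
    obtain ⟨hD, hD0⟩ := hω
    simp only [hbad_def, hbad0_def, Set.mem_ofPred_eq, not_exists, not_and, not_lt] at hD hD0
    have h1 := hD (v, w) (Finset.mk_mem_product hv hw)
    have h0 := mul_le_mul_of_nonneg_left (hD0 v hv) (sub_pos.2 hM.γ_lt_one).le
    rw [Finset.card_product, Nat.cast_mul] at h1
    have hγ : |1 - γ| = 1 - γ := abs_of_pos (sub_pos.2 hM.γ_lt_one)
    rw [empLag_eq, Lag_eq hM, add_sub_add_comm, ← mul_sub, epsStat]
    refine (abs_add_le _ _).trans (add_le_add ?_ h1)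
    rw [abs_mul, hγ, mul_assoc]
    exact h0
  have hbadμ : dataMeasure P dD μ0 n n0 (bad ×ˢ Set.univ ∪ Set.univ ×ˢ bad0)
      ≤ ENNReal.ofReal δ := by
    refine (measure_union_le _ _).trans ?_
    rw [dataMeasure, Measure.prod_prod, Measure.prod_prod, measure_univ, measure_univ, mul_one,
      one_mul]
    refine (add_le_add hbad hbad0).trans (le_of_eq ?_)
    rw [← ENNReal.ofReal_add (by positivity) (by positivity), add_halves]
  have : IsProbabilityMeasure (dataMeasure P dD μ0 n n0) := by
    unfold dataMeasure; infer_instance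
  calc 1 - ENNReal.ofReal δ
      ≤ 1 - dataMeasure P dD μ0 n n0 (bad ×ˢ Set.univ ∪ Set.univ ×ˢ bad0) :=
        tsub_le_tsub_left hbadμ 1
    _ = dataMeasure P dD μ0 n n0 (bad ×ˢ Set.univ ∪ Set.univ ×ˢ bad0)ᶜ :=
        (prob_compl_eq_one_sub (Set.toFinite _).measurableSet).symm
    _ ≤ _ := measure_mono hcompl

/-- Uniform closeness of the two Lagrangians and approximate optimality for the empirical one
give approximate optimality at the saddle point. -/
theorem Lag_saddle_sub_le {Lhat : (S → ℝ) → (S → A → ℝ) → ℝ}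
    (hM : MDPAssumptions P r μ0 γ dD) (hα : 0 < α) {Mf Bw Bf' Bf Bv ε εow : ℝ}
    (hreg : RegAssumptions f f' Mf Bw Bf' Bf) (hBw : 0 ≤ Bw)
    {vst : S → ℝ} {wst : S → A → ℝ} (hsad : IsSaddle P r μ0 γ dD f α vst wst)
    (hwst : ∀ s a, dstar dD wst s a ≤ Bw * dD s a)
    {V : Finset (S → ℝ)} {W : Finset (S → A → ℝ)} (hV : V.Nonempty) (hW : W.Nonempty)
    (hWB : ∀ w ∈ W, ∀ s a, 0 ≤ w s a ∧ w s a ≤ Bw) (hVB : ∀ v ∈ V, ∀ s, |v s| ≤ Bv)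
    (hclose : ∀ v ∈ V, ∀ w ∈ W, |Lhat v w - Lag P r μ0 γ dD f α v w| ≤ ε)
    {what : S → A → ℝ} (hwhat : what ∈ W)
    (hopt : W.sup' hW (fun w => V.inf' hV fun v => Lhat v w) - V.inf' hV (fun v => Lhat v what)
      ≤ εow) :
    Lag P r μ0 γ dD f α vst wst - Lag P r μ0 γ dD f α vst what
      ≤ 2 * ε + (εow + ((Bw + 1) *
          (V.inf' hV fun v => (∑ s : S, μ0 s * |v s - vst s|)
            + (∑ s : S, (∑ a : A, dD s a) * |v s - vst s|)
            + ∑ s : S, (∑ s' : S, ∑ a' : A, dD s' a' * P s' a' s) * |v s - vst s|)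
          + ((1 + γ) * Bv + 1 + α * Bf') *
            (W.inf' hW fun w => ∑ s : S, ∑ a : A, dD s a * |w s a - wst s a|))) := by
  obtain ⟨vt, hvt, hvt_eq⟩ := V.exists_mem_eq_inf' hV fun v => (∑ s : S, μ0 s * |v s - vst s|)
    + (∑ s : S, (∑ a : A, dD s a) * |v s - vst s|)
    + ∑ s : S, (∑ s' : S, ∑ a' : A, dD s' a' * P s' a' s) * |v s - vst s|
  obtain ⟨wt, hwt, hwt_eq⟩ := W.exists_mem_eq_inf' hW
    fun w => ∑ s : S, ∑ a : A, dD s a * |w s a - wst s a|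
  obtain ⟨vm, hvm, hvm_eq⟩ := V.exists_mem_eq_inf' hV fun v => Lhat v wt
  rw [hvt_eq, hwt_eq]
  have hsup := W.le_sup' (fun w => V.inf' hV fun v => Lhat v w) hwt
  have hinf := V.inf'_le (fun v => Lhat v what) hvt
  have hflow := Lag_eq_of_bellmanFlow (r := r) (f := f) (α := α) (bellmanFlow_of_isSaddle hsad)
    vst vm
  have hv := Lag_sub_left_le (f := f) (α := α) hM (hWB what hwhat) hBw vst vt
  have hw := Lag_sub_right_le hM hα hreg (hVB vm hvm) (hWB wt hwt) hsad.1 hwst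
  have hc1 := (abs_le.1 (hclose vt hvt what hwhat)).2
  have hc2 := (abs_le.1 (hclose vm hvm wt hwt)).1
  rw [hflow] at hw
  simp only [hvm_eq] at hsup
  linarith

end Estimation

/-- Theorem 2: error-robust version of Theorem 1, Inexact-PRO-RL. -/
theorem stmt3
    {S A : Type*} [Fintype S] [Fintype A] [Nonempty S] [Nonempty A]
    [MeasurableSpace S] [MeasurableSpace A]
    [MeasurableSingletonClass S] [MeasurableSingletonClass A]
    (P : S → A → S → ℝ) (r : S → A → ℝ) (μ0 : S → ℝ) (γ : ℝ) (dD : S → A → ℝ)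
    (hMDP : MDPAssumptions P r μ0 γ dD)
    (f f' : ℝ → ℝ) (α δ : ℝ) (hα : 0 < α) (hδ0 : 0 < δ) (hδ1 : δ < 1)
    (Mf Bw Bf' Bf Bv Be : ℝ)
    (hreg : RegAssumptions f f' Mf Bw Bf' Bf) (hfnn : ∀ x, 0 ≤ f x)
    (hBv : Bv = (α * Bf' + 1) / (1 - γ)) (hBe : Be = (1 + γ) * Bv + 1)
    (vst : S → ℝ) (wst : S → A → ℝ)
    (hsad : IsSaddle P r μ0 γ dD f α vst wst)
    (V : Finset (S → ℝ)) (W : Finset (S → A → ℝ))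
    (hV : V.Nonempty) (hW : W.Nonempty)
    (hA1 : ∀ s a, dstar dD wst s a ≤ Bw * dD s a)
    (hA4 : ∀ w ∈ W, ∀ s a, 0 ≤ w s a ∧ w s a ≤ Bw)
    (hA6 : ∀ v ∈ V, ∀ s, |v s| ≤ Bv)
    (εov εow : ℝ)
    (n n0 : ℕ) (hn : 0 < n) (hn0 : 0 < n0)
    (vhat : (Fin n → (S × A) × S) × (Fin n0 → S) → S → ℝ)
    (what : (Fin n → (S × A) × S) × (Fin n0 → S) → S → A → ℝ)
    -- Inexact-PRO-RL: approximate max-min point of the empirical Lagrangian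
    (halg : ∀ ω, vhat ω ∈ V ∧ what ω ∈ W ∧
      empLag r γ f α ω.1 ω.2 (vhat ω) (what ω)
          - V.inf' hV (fun v => empLag r γ f α ω.1 ω.2 v (what ω)) ≤ εov ∧
      W.sup' hW (fun w => V.inf' hV fun v => empLag r γ f α ω.1 ω.2 v w)
          - V.inf' hV (fun v => empLag r γ f α ω.1 ω.2 v (what ω)) ≤ εow) :
    1 - ENNReal.ofReal δ ≤
      dataMeasure P dD μ0 n n0 {ω |
        Jret P r μ0 γ (normPolicy (dstar dD wst))
            - Jret P r μ0 γ (extractPolicy (behPolicy dD) (what ω))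
          ≤ (1 / (1 - γ)) * expL1 (dstar dD wst) (normPolicy (dstar dD wst))
              (extractPolicy (behPolicy dD) (what ω)) ∧
        (1 / (1 - γ)) * expL1 (dstar dD wst) (normPolicy (dstar dD wst))
            (extractPolicy (behPolicy dD) (what ω))
          ≤ (2 / (1 - γ)) * l2nrm dD (fun s a => what ω s a - wst s a) ∧
        (2 / (1 - γ)) * l2nrm dD (fun s a => what ω s a - wst s a)
          ≤ (4 / (1 - γ)) *
              Real.sqrt (epsStat γ α Bv Bf Bw Be δ V.card W.card n n0 / (α * Mf))
            + (2 / (1 - γ)) *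
              Real.sqrt (2 * ((εov + εow) +
                ((Bw + 1) *
                  (V.inf' hV fun v => (∑ s : S, μ0 s * |v s - vst s|)
                    + (∑ s : S, (∑ a : A, dD s a) * |v s - vst s|)
                    + ∑ s : S, (∑ s' : S, ∑ a' : A, dD s' a' * P s' a' s) * |v s - vst s|)
                  + (Be + α * Bf') *
                    (W.inf' hW fun w => ∑ s : S, ∑ a : A, dD s a * |w s a - wst s a|)))
                / (α * Mf)) } := by
  have hBw : 0 ≤ Bw := by
    obtain ⟨w, hw⟩ := hW
    obtain ⟨s⟩ := ‹Nonempty S›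
    obtain ⟨a⟩ := ‹Nonempty A›
    exact (hA4 w hw s a).1.trans (hA4 w hw s a).2
  have hγ : 0 < 1 - γ := sub_pos.2 hMDP.γ_lt_one
  subst hBe
  refine (le_dataMeasure_abs_empLag_sub_le hMDP hα hδ0 hδ1 hreg hV hW hA4 hA6 hn hn0).trans
    (measure_mono fun ω hω => ?_)
  rw [Set.mem_ofPred_eq] at hω
  obtain ⟨hvhat, hwhat, hov, how⟩ := halg ω
  have hwpos : ∀ s a, 0 ≤ what ω s a := fun s a => (hA4 _ hwhat s a).1
  have hd : ∀ s a, 0 ≤ dstar dD wst s a := fun s a =>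
    mul_nonneg (hsad.1 s a) (hMDP.dD_nonneg s a)
  refine ⟨Jret_sub_le_expL1 hMDP hd (bellmanFlow_of_isSaddle hsad)
    (isPolicy_extractPolicy hMDP.dD_nonneg hwpos), ?_, ?_⟩
  · calc _ ≤ 1 / (1 - γ) * (2 * l2nrm dD fun s a => what ω s a - wst s a) :=
          mul_le_mul_of_nonneg_left (expL1_le_l2nrm hMDP hsad.1 hwpos) (by positivity)
      _ = _ := by ring
  have hεov : 0 ≤ εov :=
    (sub_nonneg.2 (V.inf'_le (fun v => empLag r γ f α ω.1 ω.2 v (what ω)) hvhat)).trans hov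
  have hαM : 0 < α * Mf := mul_pos hα hreg.Mf_pos
  have hgrow := sum_sq_le_Lag_sub hMDP hα hreg.strong hsad hwpos
  have hgap := Lag_saddle_sub_le hMDP hα hreg hBw hsad hA1 hV hW hA4 hA6 hω hwhat how
  set η := epsStat γ α Bv Bf Bw ((1 + γ) * Bv + 1) δ V.card W.card n n0
  set E := (Bw + 1) * _ + ((1 + γ) * Bv + 1 + α * Bf') * _
  set N := ∑ s, ∑ a, dD s a * (what ω s a - wst s a) ^ 2
  have hNle : N ≤ 2 ^ 2 * (η / (α * Mf)) + 2 * (εov + εow + E) / (α * Mf) := by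
    rw [← mul_div_assoc, ← add_div, le_div_iff₀ hαM]
    linarith
  have hsqrt : l2nrm dD (fun s a => what ω s a - wst s a)
      ≤ 2 * √(η / (α * Mf)) + √(2 * (εov + εow + E) / (α * Mf)) := by
    have hstat : √(2 ^ 2 * (η / (α * Mf))) = 2 * √(η / (α * Mf)) := by
      rw [Real.sqrt_mul (by norm_num), Real.sqrt_sq (by norm_num)]
    rw [l2nrm, ← hstat]
    exact (Real.sqrt_le_sqrt hNle).trans (sqrt_add_le_sqrt_add_sqrt _ _)
  calc 2 / (1 - γ) * l2nrm dD (fun s a => what ω s a - wst s a)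
      ≤ 2 / (1 - γ) * (2 * √(η / (α * Mf)) + √(2 * (εov + εow + E) / (α * Mf))) :=
        mul_le_mul_of_nonneg_left hsqrt (by positivity)
    _ = _ := by ring

end ProRL
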